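/- Let F = {f₁,…,f_N} ⊂ ℂ[x₁,…,xₙ] with N ≥ n be a polynomial system, let p ∈ ℂⁿ be an isolated singular zero of F = 0, and let m = max_i deg(f_i). Then there exists a square polynomial system F′ = {f′₁,…,f′ₙ} with each f′_i ∈ Δ_p(F) such that p is an isolated regular zero of F′ = 0 (i.e., f′_i(p) = 0 for all i and rank(J(F′)(p)) = n, and p is an isolated point of the common zero set of F′), and max_i deg(f′_i) ≤ m. -/

import Mathlib

open MvPolynomial

/-- The rank over ℂ of the Jacobian matrix of a finite polynomial system, evaluated at `p`. -/
noncomputable def jacRank {n : ℕ} {ι : Type*} [Fintype ι]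
    (g : ι → MvPolynomial (Fin n) ℂ) (p : Fin n → ℂ) : ℕ :=
  (Matrix.of fun (i : ι) (j : Fin n) => eval p (pderiv j (g i))).rank

open MvPolynomial

/-- `DeltaSet F p` is the smallest set `Δ_p(F)` of polynomials such that
(1) `F ⊆ Δ_p(F)`;
(2) `a • h ∈ Δ_p(F)` for every `h ∈ Δ_p(F)` and every nonzero scalar `a ∈ ℂ`;
(3) `h₁ + h₂ ∈ Δ_p(F)` for all `h₁, h₂ ∈ Δ_p(F)` with `h₁(p) + h₂(p) = 0`;
(4) `∂h/∂x_i ∈ Δ_p(F)` for every `h ∈ Δ_p(F)` and index `i` with `(∂h/∂x_i)(p) = 0`. -/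
inductive DeltaSet {n : ℕ} (F : Set (MvPolynomial (Fin n) ℂ)) (p : Fin n → ℂ) :
    MvPolynomial (Fin n) ℂ → Prop
  | base {f : MvPolynomial (Fin n) ℂ} (hf : f ∈ F) : DeltaSet F p f
  | smul {h : MvPolynomial (Fin n) ℂ} (a : ℂ) (ha : a ≠ 0) (hh : DeltaSet F p h) :
      DeltaSet F p (C a * h)
  | add {h₁ h₂ : MvPolynomial (Fin n) ℂ} (hh₁ : DeltaSet F p h₁) (hh₂ : DeltaSet F p h₂)
      (hsum : eval p h₁ + eval p h₂ = 0) : DeltaSet F p (h₁ + h₂)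
  | deriv {h : MvPolynomial (Fin n) ℂ} (i : Fin n) (hh : DeltaSet F p h)
      (hz : eval p (pderiv i h) = 0) : DeltaSet F p (pderiv i h)

/-!
Let `Δ` be a linear space of polynomials vanishing at `p` and closed under those partial derivatives
that vanish at `p`. If the differentials `d_p h`, `h ∈ Δ`, do not span the dual space, some `v ≠ 0`
is annihilated by all of them. Let `M ⊆ Δ` be the polynomials with zero differential, `B ⊆ Δ` the
span of their derivatives, and `E ∋ v` the annihilator of the differentials of `B`. For `e ∈ E` the
derivative `∂_e` preserves `M` and `B`, so by Taylor's formula both vanish on `p + E`. Consequently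
a member of `Δ` whose differential is zero on `E` vanishes on `p + E`, and there `Δ` is
generated by finitely many polynomials with independent differentials. They define a submersion on
`p + E` whose differential kills `v`, and the implicit function theorem makes `p` a non-isolated
zero of `Δ`.

For `Δ = Δ_p(F)` this contradiction shows that the coordinate functionals are differentials of
members of `Δ_p(F)`.
-/

section Differential

variable {R σ : Type*} [CommRing R]

/-- The directional derivative `∂_v` of polynomials, as the derivation sending `X i` to the
constant `v i`. -/
noncomputable def dirDeriv (v : σ → R) : Derivation R (MvPolynomial σ R) (MvPolynomial σ R) :=
  mkDerivation R fun i => C (v i)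

lemma dirDeriv_X (v : σ → R) (i : σ) : dirDeriv v (X i) = C (v i) :=
  mkDerivation_X R _ i

lemma dirDeriv_comm (v w : σ → R) (h : MvPolynomial σ R) :
    dirDeriv v (dirDeriv w h) = dirDeriv w (dirDeriv v h) := by
  have hbracket : ⁅dirDeriv v, dirDeriv w⁆ = 0 :=
    derivation_ext fun i => by
      simp only [Derivation.commutator_apply, dirDeriv_X, derivation_C, sub_zero,
        Derivation.zero_apply]
  rw [← sub_eq_zero, ← Derivation.commutator_apply, hbracket, Derivation.zero_apply]

lemma dirDeriv_apply [Fintype σ] (v : σ → R) (h : MvPolynomial σ R) :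
    dirDeriv v h = ∑ i, v i • pderiv i h := by
  classical
  induction h using MvPolynomial.induction_on with
  | C a => simp only [derivation_C, smul_zero, Finset.sum_const_zero]
  | add f g hf hg => simp only [map_add, hf, hg, smul_add, Finset.sum_add_distrib]
  | mul_X f i hf =>
    simp only [Derivation.leibniz, hf, dirDeriv_X, pderiv_X, smul_add, Finset.sum_add_distrib,
      Finset.smul_sum]
    simp [Pi.single_apply, smul_eq_C_mul, mul_left_comm, mul_comm]

variable [Fintype σ]

/-- The differential `d_p h` of a polynomial `h` at the point `p`, as a linear functional on the
space of directions. -/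
noncomputable def differentialAt (p : σ → R) :
    MvPolynomial σ R →ₗ[R] Module.Dual R (σ → R) where
  toFun h := ∑ i, eval p (pderiv i h) • LinearMap.proj i
  map_add' g h := by simp only [map_add, add_smul, Finset.sum_add_distrib]
  map_smul' c h := by
    simp only [Derivation.map_smul, smul_eval, mul_smul, Finset.smul_sum, RingHom.id_apply]

lemma differentialAt_apply (p v : σ → R) (h : MvPolynomial σ R) :
    differentialAt p h v = eval p (dirDeriv v h) := by
  simp [differentialAt, dirDeriv_apply, smul_eval, mul_comm]

lemma differentialAt_single [DecidableEq σ] (p : σ → R) (h : MvPolynomial σ R) (i : σ) :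
    differentialAt p h (Pi.single i 1) = eval p (pderiv i h) := by
  simp [differentialAt, Pi.single_apply]

end Differential

lemma totalDegree_pderiv_le {R σ : Type*} [CommSemiring R] (i : σ) (h : MvPolynomial σ R) :
    (pderiv i h).totalDegree ≤ h.totalDegree := by
  refine Finset.sup_le fun m hm => ?_
  have hmem : m + Finsupp.single i 1 ∈ h.support := by
    rw [mem_support_iff, coeff_pderiv] at hm
    exact mem_support_iff.mpr (left_ne_zero_of_mul hm)
  calc
    m.sum (fun _ k => k) ≤ (m + Finsupp.single i 1).sum fun _ k => k := by
      rw [Finsupp.sum_add_index' (fun _ => rfl) (fun _ _ _ => rfl)]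
      exact Nat.le_add_right _ _
    _ ≤ h.totalDegree := le_totalDegree hmem

section Taylor

variable {R σ : Type*} [CommRing R]

/-- The restriction of polynomials to the line `t ↦ p + t • e`. -/
noncomputable def restrictToLine (p e : σ → R) : MvPolynomial σ R →ₐ[R] Polynomial R :=
  aeval fun i => Polynomial.C (p i) + Polynomial.C (e i) * Polynomial.X

lemma eval_restrictToLine (p e : σ → R) (t : R) (h : MvPolynomial σ R) :
    (restrictToLine p e h).eval t = eval (p + t • e) h := by
  induction h using MvPolynomial.induction_on with
  | C a => simp [restrictToLine]
  | add f g hf hg => simp only [map_add, Polynomial.eval_add, hf, hg]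
  | mul_X f i hf =>
    rw [map_mul, Polynomial.eval_mul, hf]
    simp [restrictToLine, mul_comm t]

lemma derivative_restrictToLine (p e : σ → R) (h : MvPolynomial σ R) :
    (restrictToLine p e h).derivative = restrictToLine p e (dirDeriv e h) := by
  induction h using MvPolynomial.induction_on with
  | C a => simp [restrictToLine]
  | add f g hf hg => simp only [map_add, hf, hg]
  | mul_X f i hf =>
    rw [map_mul, Polynomial.derivative_mul, hf, Derivation.leibniz, dirDeriv_X]
    simp only [restrictToLine, aeval_X, Polynomial.derivative_C, Polynomial.derivative_mul,
      zero_mul, Polynomial.derivative_X, mul_one, zero_add, smul_eq_mul, map_add, map_mul, algHom_C,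
      Polynomial.algebraMap_eq]
    ring

lemma iterate_derivative_restrictToLine (p e : σ → R) (k : ℕ) (h : MvPolynomial σ R) :
    Polynomial.derivative^[k] (restrictToLine p e h) = restrictToLine p e ((dirDeriv e)^[k] h) :=
  (Function.Semiconj.iterate_right (f := restrictToLine p e)
    (fun g => (derivative_restrictToLine p e g).symm) k h).symm

lemma eval_add_eq_zero_of_iterate_dirDeriv [IsDomain R] [CharZero R] (p e : σ → R)
    (h : MvPolynomial σ R) (hh : ∀ k : ℕ, eval p ((dirDeriv e)^[k] h) = 0) :
    eval (p + e) h = 0 := by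
  have hline : restrictToLine p e h = 0 := by
    refine Polynomial.eq_zero_of_hasseDeriv_eq_zero _ 0 fun k => ?_
    have hk : (k.factorial • Polynomial.hasseDeriv k (restrictToLine p e h)).eval 0 = 0 := by
      rw [← LinearMap.smul_apply, Polynomial.factorial_smul_hasseDeriv,
        iterate_derivative_restrictToLine, eval_restrictToLine, zero_smul, add_zero, hh]
    rw [Polynomial.eval_smul, smul_eq_zero] at hk
    exact hk.resolve_left k.factorial_ne_zero
  simpa [hline] using (eval_restrictToLine p e 1 h).symm

lemma eval_add_eq_zero_of_mapsTo_dirDeriv [IsDomain R] [CharZero R] {p e : σ → R}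
    {S : Set (MvPolynomial σ R)} (hS : ∀ h ∈ S, eval p h = 0)
    (hderiv : Set.MapsTo (dirDeriv e) S S) {h : MvPolynomial σ R} (hh : h ∈ S) :
    eval (p + e) h = 0 :=
  eval_add_eq_zero_of_iterate_dirDeriv p e h fun k => hS _ (hderiv.iterate k hh)

/-- The restriction of polynomials to the affine subspace `p + E`, as functions on `E`. -/
noncomputable def evalTranslate (p : σ → R) (E : Submodule R (σ → R)) :
    MvPolynomial σ R →ₗ[R] E → R where
  toFun h e := eval (p + e.1) h
  map_add' _ _ := funext fun _ => map_add _ _ _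
  map_smul' _ _ := funext fun _ => smul_eval _ _ _

end Taylor

section CriticalPart

variable {K σ : Type*} [Field K] [Fintype σ]

/-- The subspace of polynomials in `Δ` whose differential at `p` is zero. -/
noncomputable def criticalPart (p : σ → K) (Δ : Submodule K (MvPolynomial σ K)) :
    Submodule K (MvPolynomial σ K) :=
  Δ ⊓ LinearMap.ker (differentialAt p)

/-- The span of all directional derivatives of the members of `criticalPart p Δ`. -/
noncomputable def criticalDerivs (p : σ → K) (Δ : Submodule K (MvPolynomial σ K)) :
    Submodule K (MvPolynomial σ K) :=
  ⨆ v : σ → K, (criticalPart p Δ).map (dirDeriv v).toLinearMap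

/-- The directions killed by the differentials at `p` of `criticalDerivs p Δ`, or equivalently by
the Hessians at `p` of `criticalPart p Δ`. -/
noncomputable def criticalDirections (p : σ → K) (Δ : Submodule K (MvPolynomial σ K)) :
    Submodule K (σ → K) :=
  ((criticalDerivs p Δ).map (differentialAt p)).dualCoannihilator

variable {p : σ → K} {Δ : Submodule K (MvPolynomial σ K)}

lemma dirDeriv_mem_criticalDerivs {h : MvPolynomial σ K} (hh : h ∈ criticalPart p Δ)
    (v : σ → K) : dirDeriv v h ∈ criticalDerivs p Δ :=
  Submodule.mem_iSup_of_mem v (Submodule.mem_map_of_mem hh)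

lemma criticalDerivs_le (hΔ : ∀ h ∈ Δ, ∀ i, eval p (pderiv i h) = 0 → pderiv i h ∈ Δ) :
    criticalDerivs p Δ ≤ Δ := by
  classical
  refine iSup_le fun v => Submodule.map_le_iff_le_comap.mpr fun h hh => ?_
  have hpderiv (i : σ) : pderiv i h ∈ Δ := hΔ h hh.1 i <| by
    rw [← differentialAt_single, LinearMap.mem_ker.mp hh.2, LinearMap.zero_apply]
  change dirDeriv v h ∈ Δ
  rw [dirDeriv_apply]
  exact Δ.sum_mem fun i _ => Δ.smul_mem _ (hpderiv i)

lemma mapsTo_dirDeriv_criticalPart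
    (hΔ : ∀ h ∈ Δ, ∀ i, eval p (pderiv i h) = 0 → pderiv i h ∈ Δ)
    {e : σ → K} (he : e ∈ criticalDirections p Δ) :
    Set.MapsTo (dirDeriv e) (criticalPart p Δ) (criticalPart p Δ) := by
  intro h hh
  refine ⟨criticalDerivs_le hΔ (dirDeriv_mem_criticalDerivs hh e), LinearMap.ext fun w => ?_⟩
  rw [differentialAt_apply, dirDeriv_comm, ← differentialAt_apply]
  exact (Submodule.mem_dualCoannihilator _).mp he _
    (Submodule.mem_map_of_mem (dirDeriv_mem_criticalDerivs hh w))

lemma mapsTo_dirDeriv_criticalDerivs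
    (hΔ : ∀ h ∈ Δ, ∀ i, eval p (pderiv i h) = 0 → pderiv i h ∈ Δ)
    {e : σ → K} (he : e ∈ criticalDirections p Δ) :
    Set.MapsTo (dirDeriv e) (criticalDerivs p Δ) (criticalDerivs p Δ) := by
  suffices criticalDerivs p Δ ≤ (criticalDerivs p Δ).comap (dirDeriv e).toLinearMap from this
  refine iSup_le fun v => Submodule.map_le_iff_le_comap.mpr fun h hh => ?_
  change dirDeriv e (dirDeriv v h) ∈ criticalDerivs p Δ
  rw [dirDeriv_comm]
  exact dirDeriv_mem_criticalDerivs (mapsTo_dirDeriv_criticalPart hΔ he hh) v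

lemma mem_criticalDirections_of_forall
    (hΔ : ∀ h ∈ Δ, ∀ i, eval p (pderiv i h) = 0 → pderiv i h ∈ Δ)
    {v : σ → K} (hv : ∀ h ∈ Δ, differentialAt p h v = 0) : v ∈ criticalDirections p Δ := by
  rw [criticalDirections, Submodule.mem_dualCoannihilator]
  rintro _ ⟨h, hh, rfl⟩
  exact hv h (criticalDerivs_le hΔ hh)

lemma mem_criticalPart_sup_criticalDerivs
    (hΔ : ∀ h ∈ Δ, ∀ i, eval p (pderiv i h) = 0 → pderiv i h ∈ Δ)
    {h : MvPolynomial σ K} (hh : h ∈ Δ)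
    (hd : ∀ e ∈ criticalDirections p Δ, differentialAt p h e = 0) :
    h ∈ criticalPart p Δ ⊔ criticalDerivs p Δ := by
  have hmem : differentialAt p h ∈ (criticalDerivs p Δ).map (differentialAt p) := by
    rw [← Subspace.dualCoannihilator_dualAnnihilator_eq (W := (criticalDerivs p Δ).map _)]
    exact (Submodule.mem_dualAnnihilator _).mpr hd
  obtain ⟨b, hb, hbh⟩ := hmem
  have hcrit : h - b ∈ criticalPart p Δ :=
    ⟨Δ.sub_mem hh (criticalDerivs_le hΔ hb), LinearMap.sub_mem_ker_iff.mpr hbh.symm⟩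
  exact sub_add_cancel h b ▸ Submodule.add_mem_sup hcrit hb

lemma eval_add_eq_zero_of_mem_criticalDirections [CharZero K]
    (hzero : ∀ h ∈ Δ, eval p h = 0)
    (hΔ : ∀ h ∈ Δ, ∀ i, eval p (pderiv i h) = 0 → pderiv i h ∈ Δ)
    {h : MvPolynomial σ K} (hh : h ∈ Δ)
    (hd : ∀ e ∈ criticalDirections p Δ, differentialAt p h e = 0)
    {e : σ → K} (he : e ∈ criticalDirections p Δ) : eval (p + e) h = 0 := by
  obtain ⟨m, hm, b, hb, rfl⟩ :=
    Submodule.mem_sup.mp (mem_criticalPart_sup_criticalDerivs hΔ hh hd)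
  have hm0 : eval (p + e) m = 0 := eval_add_eq_zero_of_mapsTo_dirDeriv
    (fun g hg => hzero g hg.1) (mapsTo_dirDeriv_criticalPart hΔ he) hm
  have hb0 : eval (p + e) b = 0 := eval_add_eq_zero_of_mapsTo_dirDeriv
    (fun g hg => hzero g (criticalDerivs_le hΔ hg)) (mapsTo_dirDeriv_criticalDerivs hΔ he) hb
  rw [map_add, hm0, hb0, add_zero]

end CriticalPart

section ImplicitFunction

open Filter Topology

variable {𝕜 E F : Type*} [NontriviallyNormedField 𝕜] [CompleteSpace 𝕜]
  [NormedAddCommGroup E] [NormedSpace 𝕜 E]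

lemma ker_eq_bot_of_isolated_in_fiber [CompleteSpace E] [NormedAddCommGroup F] [NormedSpace 𝕜 F]
    [FiniteDimensional 𝕜 F] {f : E → F} {f' : E →L[𝕜] F} {a : E} (hf : HasStrictFDerivAt f f' a)
    (hsurj : f'.range = ⊤) (hiso : ∀ᶠ x in 𝓝 a, f x = f a → x = a) : f'.ker = ⊥ := by
  let g : f'.ker → E := hf.implicitFunction f f' hsurj (f a)
  have hg : HasStrictFDerivAt g f'.ker.subtypeL 0 := hf.to_implicitFunction hsurj
  have hg0 : g 0 = a := hf.implicitFunction_apply_image hsurj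
  have hfiber : ∀ᶠ y in 𝓝 0, f (g y) = f a :=
    (Continuous.prodMk_right (f a)).continuousAt.eventually (hf.map_implicitFunction_eq hsurj)
  have hnear : ∀ᶠ y in 𝓝 0, f (g y) = f a → g y = a :=
    hg.continuousAt.eventually (by rwa [hg0])
  have hincl : f'.ker.subtypeL = 0 := hg.hasFDerivAt.unique <|
    (hasFDerivAt_const a 0).congr_of_eventuallyEq (hfiber.mp hnear)
  refine (Submodule.eq_bot_iff _).mpr fun v hv => ?_
  simpa only [Submodule.subtypeL_apply, zero_apply] using DFunLike.congr_fun hincl ⟨v, hv⟩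

lemma range_pi_eq_top_of_linearIndependent {K V ι : Type*} [Field K] [AddCommGroup V]
    [Module K V] [Finite ι] {r : ι → Module.Dual K V} (hr : LinearIndependent K r) :
    LinearMap.range (LinearMap.pi r) = ⊤ := by
  have hfun : LinearIndependent K fun i => (r i : V → K) :=
    hr.map' (LinearMap.ltoFun K V K K) (LinearMap.ker_eq_bot.mpr DFunLike.coe_injective)
  rw [← Submodule.span_eq (LinearMap.range _), LinearMap.coe_range]
  exact span_flip_eq_top_iff_linearIndependent.mpr hfun

lemma exists_linearIndependent_map_forall_mem_span {K V W X : Type*} [Field K]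
    [AddCommGroup V] [Module K V] [AddCommGroup W] [Module K W] [FiniteDimensional K W]
    [AddCommGroup X] [Module K X] (D : V →ₗ[K] W) (ev : V →ₗ[K] X)
    (hker : LinearMap.ker D ≤ LinearMap.ker ev) :
    ∃ (k : ℕ) (g : Fin k → V), LinearIndependent K (fun i => D (g i)) ∧
      ∀ h, ev h ∈ Submodule.span K (Set.range fun i => ev (g i)) := by
  let b := Module.finBasis K (LinearMap.range D)
  choose g hg using fun i => (b i).2
  have hcomp : (LinearMap.range D).subtype ∘ b = D ∘ g := funext fun i => (hg i).symm
  have hli : LinearIndependent K (D ∘ g) :=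
    hcomp ▸ b.linearIndependent.map' _ (Submodule.ker_subtype _)
  refine ⟨_, g, hli, fun h => ?_⟩
  obtain ⟨u, hu, hDu⟩ : D h ∈ (Submodule.span K (Set.range g)).map D := by
    rw [Submodule.map_span, ← Set.range_comp, ← hcomp, Set.range_comp, ← Submodule.map_span]
    exact Submodule.mem_map_of_mem (b.mem_span ⟨D h, LinearMap.mem_range_self D h⟩)
  have hev : ev u = ev h := LinearMap.sub_mem_ker_iff.mp (hker (LinearMap.sub_mem_ker_iff.mpr hDu))
  have hmem : ev u ∈ (Submodule.span K (Set.range g)).map ev := Submodule.mem_map_of_mem hu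
  rwa [hev, Submodule.map_span, ← Set.range_comp] at hmem

lemma eq_zero_of_forall_fderiv_apply_eq_zero [FiniteDimensional 𝕜 E]
    {V : Type*} [AddCommGroup V] [Module 𝕜 V]
    (ev : V →ₗ[𝕜] E → 𝕜) (D : V →ₗ[𝕜] Module.Dual 𝕜 E) {a : E}
    (hD : ∀ h, HasStrictFDerivAt (ev h) (D h).toContinuousLinearMap a)
    (hker : LinearMap.ker D ≤ LinearMap.ker ev) (hzero : ∀ h, ev h a = 0)
    (hiso : ∀ᶠ x in 𝓝 a, (∀ h, ev h x = 0) → x = a)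
    {v : E} (hv : ∀ h, D h v = 0) : v = 0 := by
  have := FiniteDimensional.complete 𝕜 E
  obtain ⟨k, g, hli, hspan⟩ := exists_linearIndependent_map_forall_mem_span D ev hker
  let ψ' := (LinearMap.pi fun i => D (g i)).toContinuousLinearMap
  have hψ : HasStrictFDerivAt (fun x i => ev (g i) x) ψ' a :=
    hasStrictFDerivAt_pi'.mpr fun i => hD (g i)
  have hiso' : ∀ᶠ x in 𝓝 a, (fun i => ev (g i) x) = (fun i => ev (g i) a) → x = a := by
    filter_upwards [hiso] with x hx hgx
    have hle : Submodule.span 𝕜 (Set.range fun i => ev (g i)) ≤ LinearMap.ker (LinearMap.proj x) :=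
      Submodule.span_le.mpr <| Set.range_subset_iff.mpr fun i =>
        (congrFun hgx i).trans (hzero (g i))
    exact hx fun h => hle (hspan h)
  have hvker : v ∈ ψ'.ker := funext fun i => hv (g i)
  rwa [ker_eq_bot_of_isolated_in_fiber hψ (range_pi_eq_top_of_linearIndependent hli) hiso',
    Submodule.mem_bot] at hvker

end ImplicitFunction

section IsolatedZeros

open Filter Topology

variable {𝕜 σ : Type*} [NontriviallyNormedField 𝕜] [CompleteSpace 𝕜] [Fintype σ]

lemma hasStrictFDerivAt_eval (p : σ → 𝕜) (h : MvPolynomial σ 𝕜) :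
    HasStrictFDerivAt (fun y => eval y h) (differentialAt p h).toContinuousLinearMap p := by
  induction h using MvPolynomial.induction_on with
  | C a =>
    simp only [eval_C]
    refine (hasStrictFDerivAt_const a p).congr_fderiv ?_
    ext v
    simp [differentialAt_apply]
  | add f g hf hg =>
    simp only [map_add]
    exact hf.add hg
  | mul_X f i hf =>
    simp only [map_mul, eval_X]
    refine (hf.mul (hasStrictFDerivAt_apply i p)).congr_fderiv ?_
    ext v
    simp [differentialAt_apply, dirDeriv_X]

lemma isolated_zero_of_injective_differentialAt {ι : Type*} [Finite ι] {p : σ → 𝕜}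
    {g : ι → MvPolynomial σ 𝕜}
    (hinj : Function.Injective (LinearMap.pi fun i => differentialAt p (g i))) :
    ∀ᶠ y in 𝓝 p, (∀ i, eval y (g i) = 0) → y = p := by
  have := Fintype.ofFinite ι
  have hderiv : HasFDerivAt (fun y i => eval y (g i))
      (LinearMap.pi fun i => differentialAt p (g i)).toContinuousLinearMap p :=
    hasFDerivAt_pi'.mpr fun i => (hasStrictFDerivAt_eval p (g i)).hasFDerivAt
  obtain ⟨c, -, hc⟩ := (LinearMap.injective_iff_antilipschitz _).mp hinj
  filter_upwards [eventually_nhdsWithin_iff.mp (hderiv.eventually_ne (c := 0) ⟨c, hc⟩)]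
    with y hy hzero
  by_contra hne
  exact hy hne (funext hzero)

lemma hasStrictFDerivAt_evalTranslate (p : σ → 𝕜) (E : Submodule 𝕜 (σ → 𝕜))
    (h : MvPolynomial σ 𝕜) :
    HasStrictFDerivAt (evalTranslate p E h)
      (E.subtype.dualMap (differentialAt p h)).toContinuousLinearMap 0 := by
  have htranslate : HasStrictFDerivAt (fun e : E => p + e.1) E.subtypeL 0 :=
    E.subtypeL.hasStrictFDerivAt.const_add p
  have heval : HasStrictFDerivAt (fun y => eval y h)
      (differentialAt p h).toContinuousLinearMap (p + (0 : E).1) := by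
    simpa using hasStrictFDerivAt_eval p h
  exact HasStrictFDerivAt.comp (f := fun e : E => p + e.1) 0 heval htranslate

lemma eq_zero_of_forall_differentialAt_apply_eq_zero {p : σ → 𝕜}
    {Δ : Submodule 𝕜 (MvPolynomial σ 𝕜)} {E : Submodule 𝕜 (σ → 𝕜)}
    (hzero : ∀ h ∈ Δ, eval p h = 0)
    (hE : ∀ h ∈ Δ, (∀ e ∈ E, differentialAt p h e = 0) → ∀ e ∈ E, eval (p + e) h = 0)
    (hiso : ∀ᶠ y in 𝓝 p, (∀ h ∈ Δ, eval y h = 0) → y = p)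
    {v : σ → 𝕜} (hvE : v ∈ E) (hv : ∀ h ∈ Δ, differentialAt p h v = 0) : v = 0 := by
  let ev : Δ →ₗ[𝕜] E → 𝕜 := evalTranslate p E ∘ₗ Δ.subtype
  let D : Δ →ₗ[𝕜] Module.Dual 𝕜 E := E.subtype.dualMap ∘ₗ differentialAt p ∘ₗ Δ.subtype
  have hD (h : Δ) : HasStrictFDerivAt (ev h) (D h).toContinuousLinearMap 0 :=
    hasStrictFDerivAt_evalTranslate p E h
  have hker : LinearMap.ker D ≤ LinearMap.ker ev := fun h hh => funext fun e =>
    hE h h.2 (fun w hw => LinearMap.congr_fun hh ⟨w, hw⟩) e e.2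
  have hev (h : Δ) : ev h 0 = 0 := (congrArg (eval · h.1) (add_zero p)).trans (hzero h h.2)
  have hisoE : ∀ᶠ e in 𝓝 0, (∀ h, ev h e = 0) → e = 0 := by
    have htranslate : Tendsto (fun e : E => p + e.1) (𝓝 0) (𝓝 p) :=
      Continuous.tendsto' (by fun_prop) 0 p (add_zero p)
    filter_upwards [htranslate.eventually hiso] with e he hzeros
    exact Subtype.ext (add_eq_left.mp (he fun h hh => hzeros ⟨h, hh⟩))
  have hv0 : (⟨v, hvE⟩ : E) = 0 :=
    eq_zero_of_forall_fderiv_apply_eq_zero ev D hD hker hev hisoE fun h => hv h h.2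
  exact congrArg Subtype.val hv0

theorem map_differentialAt_eq_top_of_isolated_zero [CharZero 𝕜] {p : σ → 𝕜}
    {Δ : Submodule 𝕜 (MvPolynomial σ 𝕜)} (hzero : ∀ h ∈ Δ, eval p h = 0)
    (hΔ : ∀ h ∈ Δ, ∀ i, eval p (pderiv i h) = 0 → pderiv i h ∈ Δ)
    (hiso : ∀ᶠ y in 𝓝 p, (∀ h ∈ Δ, eval y h = 0) → y = p) :
    Δ.map (differentialAt p) = ⊤ := by
  suffices hbot : (Δ.map (differentialAt p)).dualCoannihilator = ⊥ by
    rw [← Subspace.dualCoannihilator_dualAnnihilator_eq (W := Δ.map _), hbot,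
      Submodule.dualAnnihilator_bot]
  refine (Submodule.eq_bot_iff _).mpr fun v hv => ?_
  replace hv (h) (hh : h ∈ Δ) : differentialAt p h v = 0 :=
    (Submodule.mem_dualCoannihilator v).mp hv _ (Submodule.mem_map_of_mem hh)
  exact eq_zero_of_forall_differentialAt_apply_eq_zero hzero
    (fun _ hh hd _ he => eval_add_eq_zero_of_mem_criticalDirections hzero hΔ hh hd he) hiso
    (mem_criticalDirections_of_forall hΔ hv) hv

end IsolatedZeros

section DeltaSet

variable {n : ℕ} {F : Set (MvPolynomial (Fin n) ℂ)} {p : Fin n → ℂ}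

lemma DeltaSet.eval_eq_zero (hF : ∀ g ∈ F, eval p g = 0) {h : MvPolynomial (Fin n) ℂ}
    (hh : DeltaSet F p h) : eval p h = 0 := by
  induction hh with
  | base hf => exact hF _ hf
  | smul a _ _ ih => rw [map_mul, ih, mul_zero]
  | add _ _ hsum => rwa [map_add]
  | deriv _ _ hz => exact hz

lemma DeltaSet.totalDegree_le {d : ℕ} (hF : ∀ g ∈ F, g.totalDegree ≤ d)
    {h : MvPolynomial (Fin n) ℂ} (hh : DeltaSet F p h) : h.totalDegree ≤ d := by
  induction hh with
  | base hf => exact hF _ hf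
  | smul a _ _ ih => exact smul_eq_C_mul (R := ℂ) _ a ▸ (totalDegree_smul_le a _).trans ih
  | add _ _ _ ih₁ ih₂ => exact (totalDegree_add _ _).trans (max_le ih₁ ih₂)
  | deriv i _ _ ih => exact (totalDegree_pderiv_le i _).trans ih

/-- `Δ_p(F)` together with the zero polynomial, as a linear subspace, for `F` vanishing at `p`. The
zero polynomial is adjoined because `Δ_p(∅)` is empty. -/
def deltaSubmodule (hF : ∀ g ∈ F, eval p g = 0) : Submodule ℂ (MvPolynomial (Fin n) ℂ) where
  carrier := {h | h = 0 ∨ DeltaSet F p h}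
  zero_mem' := Or.inl rfl
  add_mem' := by
    rintro g h (rfl | hg) (rfl | hh)
    · exact Or.inl (add_zero 0)
    · exact Or.inr (by rwa [zero_add])
    · exact Or.inr (by rwa [add_zero])
    · exact Or.inr (hg.add hh (by rw [hg.eval_eq_zero hF, hh.eval_eq_zero hF, add_zero]))
  smul_mem' := by
    rintro c h (rfl | hh)
    · exact Or.inl (smul_zero c)
    · rcases eq_or_ne c 0 with rfl | hc
      · exact Or.inl (zero_smul ℂ h)
      · exact Or.inr (smul_eq_C_mul h c ▸ hh.smul c hc)

lemma mem_deltaSubmodule {hF : ∀ g ∈ F, eval p g = 0} {h : MvPolynomial (Fin n) ℂ} :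
    h ∈ deltaSubmodule hF ↔ h = 0 ∨ DeltaSet F p h :=
  Iff.rfl

open Topology in
lemma exists_deltaSet_differentialAt_eq (hF : ∀ g ∈ F, eval p g = 0)
    (hiso : ∀ᶠ y in 𝓝 p, (∀ g ∈ F, eval y g = 0) → y = p)
    {l : Module.Dual ℂ (Fin n → ℂ)} (hl : l ≠ 0) :
    ∃ h, DeltaSet F p h ∧ differentialAt p h = l := by
  have htop : (deltaSubmodule hF).map (differentialAt p) = ⊤ := by
    refine map_differentialAt_eq_top_of_isolated_zero ?_ ?_ ?_
    · rintro h (rfl | hh)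
      exacts [map_zero _, hh.eval_eq_zero hF]
    · rintro h (rfl | hh) i hi
      exacts [Or.inl (map_zero _), Or.inr (hh.deriv i hi)]
    · exact hiso.mono fun y hy hΔ => hy fun g hg => hΔ g (Or.inr (.base hg))
  obtain ⟨h, hh, rfl⟩ : l ∈ (deltaSubmodule hF).map (differentialAt p) :=
    htop ▸ Submodule.mem_top
  have hne : h ≠ 0 := fun h0 => hl (by rw [h0, map_zero])
  exact ⟨h, (mem_deltaSubmodule.mp hh).resolve_left hne, rfl⟩

end DeltaSet

lemma jacRank_eq_finrank_range {n : ℕ} {ι : Type*} [Fintype ι] (g : ι → MvPolynomial (Fin n) ℂ)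
    (p : Fin n → ℂ) :
    jacRank g p =
      Module.finrank ℂ (LinearMap.range (LinearMap.pi fun i => differentialAt p (g i))) := by
  have hlin : (Matrix.of fun i j => eval p (pderiv j (g i))).mulVecLin =
      LinearMap.pi fun i => differentialAt p (g i) := by
    refine LinearMap.ext fun v => funext fun i => ?_
    simp [differentialAt, Matrix.mulVec, dotProduct]
  rw [jacRank, Matrix.rank, hlin]

theorem exists_deflated_square_system_general {n : ℕ} {F : Set (MvPolynomial (Fin n) ℂ)}
    {p : Fin n → ℂ} (hzero : ∀ g ∈ F, eval p g = 0)
    (hisolated : ∃ ε > 0, ∀ y : Fin n → ℂ, dist y p < ε → (∀ g ∈ F, eval y g = 0) → y = p) :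
    ∃ f' : Fin n → MvPolynomial (Fin n) ℂ,
      (∀ i, DeltaSet F p (f' i)) ∧
      (∀ i, eval p (f' i) = 0) ∧
      jacRank f' p = n ∧
      (∃ ε > 0, ∀ y : Fin n → ℂ, dist y p < ε → (∀ i, eval y (f' i) = 0) → y = p) ∧
      ∀ i d, (∀ g ∈ F, g.totalDegree ≤ d) → (f' i).totalDegree ≤ d := by
  have hproj (i : Fin n) : (LinearMap.proj i : Module.Dual ℂ (Fin n → ℂ)) ≠ 0 := fun h =>
    one_ne_zero (α := ℂ) (LinearMap.congr_fun h 1)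
  choose f' hf' hdiff using fun i =>
    exists_deltaSet_differentialAt_eq hzero (Metric.eventually_nhds_iff.mpr hisolated) (hproj i)
  have hid : LinearMap.pi (fun i => differentialAt p (f' i)) = LinearMap.id := by
    simp only [hdiff, LinearMap.pi_proj]
  refine ⟨f', hf', fun i => (hf' i).eval_eq_zero hzero, ?_, ?_, fun i d hd =>
    (hf' i).totalDegree_le hd⟩
  · rw [jacRank_eq_finrank_range, hid, LinearMap.range_id, finrank_top, Module.finrank_fin_fun]
  · exact Metric.eventually_nhds_iff.mp <|
      isolated_zero_of_injective_differentialAt (hid ▸ Function.injective_id)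

/-- Let `F = {f₁,…,f_N} ⊂ ℂ[x₁,…,xₙ]` with `N ≥ n`, let `p ∈ ℂⁿ` be an
isolated singular zero of `F = 0`, and let `m = maxᵢ deg fᵢ`. Then there is a square system
`F′ = {f′₁,…,f′ₙ}` with each `f′ᵢ ∈ Δ_p(F)` such that `p` is an isolated regular zero of
`F′ = 0` and `maxᵢ deg f′ᵢ ≤ m`. -/
theorem exists_deflated_square_system {n N : ℕ} (hN : n ≤ N)
    (f : Fin N → MvPolynomial (Fin n) ℂ) (p : Fin n → ℂ)
    (hzero : ∀ i, eval p (f i) = 0)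
    (hisolated : ∃ ε > 0, ∀ y : Fin n → ℂ, dist y p < ε → (∀ i, eval y (f i) = 0) → y = p)
    (hsingular : jacRank f p < n) :
    ∃ f' : Fin n → MvPolynomial (Fin n) ℂ,
      (∀ i, DeltaSet (Set.range f) p (f' i)) ∧
      (∀ i, eval p (f' i) = 0) ∧
      jacRank f' p = n ∧
      (∃ ε > 0, ∀ y : Fin n → ℂ, dist y p < ε → (∀ i, eval y (f' i) = 0) → y = p) ∧
      ∀ i, (f' i).totalDegree ≤ Finset.univ.sup fun j => (f j).totalDegree := by
  obtain ⟨f', hf', hp, hrank, hiso, hdeg⟩ := exists_deflated_square_system_general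
    (F := Set.range f) (Set.forall_mem_range.mpr hzero) (by simpa using hisolated)
  exact ⟨f', hf', hp, hrank, hiso, fun i => hdeg i _ (Set.forall_mem_range.mpr fun j =>
    Finset.le_sup (f := fun j => (f j).totalDegree) (Finset.mem_univ j))⟩
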